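/- Let r ≥ 2 be an integer and let p, q ∈ ℤ. The characteristic polynomial of the (r−1)×(r−1) matrix C(p,q) is ∏_{k=1}^{r−1} (λ − 2 cos(d·kπ/r)), where d = gcd(p, q, 2r). -/

import Mathlib

open Complex Matrix

/-- `t = exp(iπ/(2r))`. -/
noncomputable def tconst (r : ℕ) : ℂ := Complex.exp (Real.pi * Complex.I / (2 * r))

/-- `ε(k,j) = 1` if `j ≡ k (mod 2r)`, `−1` if `j ≡ −k (mod 2r)`, `0` otherwise. -/
def eps (r : ℕ) (k j : ℤ) : ℤ :=
  if (2 * (r : ℤ)) ∣ (j - k) then 1 else if (2 * (r : ℤ)) ∣ (j + k) then -1 else 0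

/-- The matrix of the Weyl quantization of `2 cos 2π(px+qy)` in the basis `ζ_1, …, ζ_{r−1}`:
`C(p,q)_{k,m} = t^{−pq} (t^{2qm} ε(k, m−p) + t^{−2qm} ε(k, m+p))`, with indices shifted so that
the index `k : Fin (r-1)` corresponds to `k+1 ∈ {1, …, r−1}`. -/
noncomputable def Cmat (r : ℕ) (p q : ℤ) : Matrix (Fin (r - 1)) (Fin (r - 1)) ℂ :=
  Matrix.of fun k m =>
    tconst r ^ (-(p * q)) *
      (tconst r ^ (2 * q * ((m : ℤ) + 1)) * (eps r ((k : ℤ) + 1) (((m : ℤ) + 1) - p) : ℂ) +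
       tconst r ^ (-(2 * q * ((m : ℤ) + 1))) * (eps r ((k : ℤ) + 1) (((m : ℤ) + 1) + p) : ℂ))

/-- The quantized integer `[n] = sin(nπ/r)/sin(π/r)`. -/
noncomputable def qint (r : ℕ) (n : ℤ) : ℝ :=
  Real.sin (n * Real.pi / r) / Real.sin (Real.pi / r)

namespace CharpolyAux

open Polynomial in
/-- Two finite families of reals with the same power sums give the same polynomial. -/
lemma prod_eq_of_power_sums {ι : Type*} [Fintype ι] (a b : ι → ℝ)
    (h : ∀ n : ℕ, ∑ i, a i ^ n = ∑ i, b i ^ n) :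
    ∏ i, (X - C ((a i : ℝ) : ℂ)) = ∏ i, (X - C ((b i : ℝ) : ℂ)) := by
  classical
  have hP : ∀ P : ℝ[X], ∑ i, P.eval (a i) = ∑ i, P.eval (b i) := by
    intro P
    simp only [Polynomial.eval_eq_sum, Polynomial.sum]
    rw [Finset.sum_comm]
    conv_rhs => rw [Finset.sum_comm]
    refine Finset.sum_congr rfl fun n _ => ?_
    rw [← Finset.mul_sum, ← Finset.mul_sum, h n]
  have hM : (Finset.univ : Finset ι).val.map a = (Finset.univ : Finset ι).val.map b := by
    ext x
    set s : Finset ℝ := Finset.univ.image a ∪ Finset.univ.image b ∪ {x} with hs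
    set P : ℝ[X] := Lagrange.interpolate s id (fun y => if x = y then 1 else 0) with hPd
    have hev : ∀ y ∈ s, P.eval y = if x = y then 1 else 0 := by
      intro y hy
      exact Lagrange.eval_interpolate_at_node (s := s) (v := id)
        (fun y => if x = y then (1 : ℝ) else 0) (Set.injOn_id _) hy
    have h1 := hP P
    rw [Finset.sum_congr rfl (fun i _ => hev (a i) (by simp [hs])),
      Finset.sum_congr rfl (fun i _ => hev (b i) (by simp [hs]))] at h1
    rw [Multiset.count_map, Multiset.count_map]
    rw [Finset.sum_boole, Finset.sum_boole] at h1
    exact_mod_cast h1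
  have h2 := congrArg (fun M : Multiset ℝ => (M.map (fun x : ℝ => (X - C ((x : ℝ) : ℂ)))).prod) hM
  simpa [Multiset.map_map, Function.comp_def] using h2

/-- The trace of a power of a Hermitian matrix. -/
lemma trace_pow_herm {n : Type*} [Fintype n] [DecidableEq n] {A : Matrix n n ℂ}
    (hA : A.IsHermitian) (k : ℕ) :
    (A ^ k).trace = ((∑ i, hA.eigenvalues i ^ k : ℝ) : ℂ) := by
  conv_lhs => rw [hA.spectral_theorem, ← map_pow, Unitary.conjStarAlgAut_apply,
    Matrix.trace_mul_comm, ← mul_assoc]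
  simp [Matrix.diagonal_pow, Matrix.trace_diagonal]

lemma charpoly_eq_of_trace_pow {n : Type*} [Fintype n] [DecidableEq n] {A B : Matrix n n ℂ}
    (hA : A.IsHermitian) (hB : B.IsHermitian) (h : ∀ k : ℕ, (A ^ k).trace = (B ^ k).trace) :
    A.charpoly = B.charpoly := by
  rw [hA.charpoly_eq, hB.charpoly_eq]
  refine prod_eq_of_power_sums _ _ fun k => ?_
  have := h k
  rw [trace_pow_herm hA, trace_pow_herm hB] at this
  exact_mod_cast this

/-- Indicator of divisibility by `2r`. -/
noncomputable def chi (r : ℕ) (x : ℤ) : ℂ := if (2 * (r : ℤ)) ∣ x then 1 else 0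

lemma chi_congr {r : ℕ} {x y : ℤ} (h : (2 * (r : ℤ)) ∣ x ↔ (2 * (r : ℤ)) ∣ y) :
    chi r x = chi r y := by
  unfold chi
  by_cases hx : (2 * (r : ℤ)) ∣ x
  · rw [if_pos hx, if_pos (h.1 hx)]
  · rw [if_neg hx, if_neg (fun h' => hx (h.2 h'))]

lemma chi_neg' {r : ℕ} {x y : ℤ} (h : x = -y) : chi r x = chi r y := by
  subst h; exact chi_congr (dvd_neg)

lemma chi_add {r : ℕ} {x y : ℤ} (h : (2 * (r : ℤ)) ∣ x - y) : chi r x = chi r y :=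
  chi_congr (by
    constructor
    · intro hx; have := dvd_sub hx h; simpa using this
    · intro hx; have := dvd_add h hx; simpa using this)

lemma eps_eq {r : ℕ} {k : ℤ} (h1 : 1 ≤ k) (h2 : k < r) (j : ℤ) :
    ((eps r k j : ℤ) : ℂ) = chi r (j - k) - chi r (j + k) := by
  unfold eps chi
  by_cases ha : (2 * (r : ℤ)) ∣ j - k
  · have hb : ¬ (2 * (r : ℤ)) ∣ j + k := by
      intro hb
      have h3 := dvd_sub hb ha
      have h4 : (2 * (r : ℤ)) ≤ j + k - (j - k) := Int.le_of_dvd (by linarith) h3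
      linarith
    simp [ha, hb]
  · by_cases hb : (2 * (r : ℤ)) ∣ j + k <;> simp [ha, hb]

lemma t_ne (r : ℕ) : tconst r ≠ 0 := Complex.exp_ne_zero _

lemma t_prim {r : ℕ} (hr : 2 ≤ r) : IsPrimitiveRoot (tconst r) (4 * r) := by
  have := Complex.isPrimitiveRoot_exp (4 * r) (by omega)
  convert this using 1
  unfold tconst
  congr 1
  have : (r : ℂ) ≠ 0 := by exact_mod_cast (by omega : r ≠ 0)
  push_cast
  field_simp
  ring

lemma t_congr {r : ℕ} (hr : 2 ≤ r) {a b : ℤ} (h : (4 * (r : ℤ)) ∣ a - b) :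
    tconst r ^ a = tconst r ^ b := by
  have h1 : tconst r ^ (a - b) = 1 := ((t_prim hr).zpow_eq_one_iff_dvd _).2 (by exact_mod_cast h)
  have : a = (a - b) + b := by ring
  rw [this, zpow_add₀ (t_ne r), h1, one_mul]

lemma t_conj (r : ℕ) (a : ℤ) : (starRingEnd ℂ) (tconst r ^ a) = tconst r ^ (-a) := by
  rw [map_zpow₀, _root_.zpow_neg, ← _root_.inv_zpow]
  congr 1
  unfold tconst
  rw [← Complex.exp_conj, ← Complex.exp_neg]
  congr 1
  have h2 : (starRingEnd ℂ) 2 = 2 := Complex.conj_ofNat 2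
  simp [neg_div, h2]

/-- The matrix entries, as a function on pairs of integers. -/
noncomputable def G (r : ℕ) (p q k m : ℤ) : ℂ :=
  tconst r ^ (-(p * q)) *
    (tconst r ^ (2 * q * m) * (chi r (m - p - k) - chi r (m - p + k)) +
     tconst r ^ (-(2 * q * m)) * (chi r (m + p - k) - chi r (m + p + k)))

lemma Cmat_apply (r : ℕ) (p q : ℤ) (k m : Fin (r - 1)) :
    Cmat r p q k m = G r p q ((k : ℤ) + 1) ((m : ℤ) + 1) := by
  have hk := k.2
  simp only [Cmat, Matrix.of_apply, G]
  rw [eps_eq (by omega) (by omega), eps_eq (by omega) (by omega)]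

/-- Matching of exponential terms. -/
lemma term_congr {r : ℕ} (hr : 2 ≤ r) {a b x y : ℤ}
    (h : (2 * (r : ℤ)) ∣ x ↔ (2 * (r : ℤ)) ∣ y)
    (h' : ∀ c, x = 2 * (r : ℤ) * c → (4 * (r : ℤ)) ∣ a - b) :
    tconst r ^ a * chi r x = tconst r ^ b * chi r y := by
  rw [chi_congr h.symm]
  by_cases hx : (2 * (r : ℤ)) ∣ x
  · obtain ⟨c, hc⟩ := hx
    rw [t_congr hr (h' c hc)]
  · simp [chi, hx]

lemma G_expand (r : ℕ) (p q k m : ℤ) : G r p q k m =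
    tconst r ^ (-(p * q) + 2 * q * m) * chi r (m - p - k)
    - tconst r ^ (-(p * q) + 2 * q * m) * chi r (m - p + k)
    + tconst r ^ (-(p * q) - 2 * q * m) * chi r (m + p - k)
    - tconst r ^ (-(p * q) - 2 * q * m) * chi r (m + p + k) := by
  unfold G
  rw [sub_eq_add_neg (-(p * q)), zpow_add₀ (t_ne r), zpow_add₀ (t_ne r)]
  ring

lemma chi_conj (r : ℕ) (x : ℤ) : (starRingEnd ℂ) (chi r x) = chi r x := by
  unfold chi; split_ifs <;> simp

lemma G_herm {r : ℕ} (hr : 2 ≤ r) (p q k m : ℤ) :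
    (starRingEnd ℂ) (G r p q k m) = G r p q m k := by
  rw [G_expand, G_expand]
  simp only [map_add, map_sub, map_mul, t_conj, chi_conj]
  have e1 : tconst r ^ (-(-(p * q) + 2 * q * m)) * chi r (m - p - k)
      = tconst r ^ (-(p * q) - 2 * q * k) * chi r (k + p - m) := by
    apply term_congr hr
    · rw [← dvd_neg]; ring_nf
    · intro c hc; exact ⟨-q * c, by linear_combination (-2 * q) * hc⟩
  have e2 : tconst r ^ (-(-(p * q) + 2 * q * m)) * chi r (m - p + k)
      = tconst r ^ (-(p * q) + 2 * q * k) * chi r (k - p + m) := by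
    apply term_congr hr
    · ring_nf
    · intro c hc; exact ⟨-q * c, by linear_combination (-2 * q) * hc⟩
  have e3 : tconst r ^ (-(-(p * q) - 2 * q * m)) * chi r (m + p - k)
      = tconst r ^ (-(p * q) + 2 * q * k) * chi r (k - p - m) := by
    apply term_congr hr
    · rw [← dvd_neg]; ring_nf
    · intro c hc; exact ⟨q * c, by linear_combination (2 * q) * hc⟩
  have e4 : tconst r ^ (-(-(p * q) - 2 * q * m)) * chi r (m + p + k)
      = tconst r ^ (-(p * q) - 2 * q * k) * chi r (k + p + m) := by
    apply term_congr hr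
    · ring_nf
    · intro c hc; exact ⟨q * c, by linear_combination (2 * q) * hc⟩
  rw [e1, e2, e3, e4]
  ring

lemma Cmat_herm {r : ℕ} (hr : 2 ≤ r) (p q : ℤ) : (Cmat r p q).IsHermitian := by
  ext i j
  rw [Matrix.conjTranspose_apply, Cmat_apply, Cmat_apply]
  exact G_herm hr _ _ _ _

lemma G_odd (r : ℕ) (p q k m : ℤ) : G r p q k (-m) = - G r p q k m := by
  unfold G
  rw [chi_neg' (show -m - p - k = -(m + p + k) by ring),
    chi_neg' (show -m - p + k = -(m + p - k) by ring),
    chi_neg' (show -m + p - k = -(m - p + k) by ring),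
    chi_neg' (show -m + p + k = -(m - p - k) by ring)]
  ring_nf

lemma G_per {r : ℕ} (hr : 2 ≤ r) (p q k m c : ℤ) :
    G r p q k (m + 2 * r * c) = G r p q k m := by
  unfold G
  rw [t_congr hr (show (4 * (r : ℤ)) ∣ 2 * q * (m + 2 * r * c) - 2 * q * m from
      ⟨q * c, by ring⟩),
    t_congr hr (show (4 * (r : ℤ)) ∣ -(2 * q * (m + 2 * r * c)) - -(2 * q * m) from
      ⟨-q * c, by ring⟩),
    chi_add (show 2 * (r : ℤ) ∣ (m + 2 * r * c - p - k) - (m - p - k) from ⟨c, by ring⟩),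
    chi_add (show 2 * (r : ℤ) ∣ (m + 2 * r * c - p + k) - (m - p + k) from ⟨c, by ring⟩),
    chi_add (show 2 * (r : ℤ) ∣ (m + 2 * r * c + p - k) - (m + p - k) from ⟨c, by ring⟩),
    chi_add (show 2 * (r : ℤ) ∣ (m + 2 * r * c + p + k) - (m + p + k) from ⟨c, by ring⟩)]

lemma chi_small {r : ℕ} {x : ℤ} (h1 : -(2 * (r : ℤ)) < x) (h2 : x < 2 * r) (h0 : x ≠ 0) :
    chi r x = 0 := by
  unfold chi
  rw [if_neg]
  intro h
  exact h0 (Int.eq_zero_of_abs_lt_dvd h (abs_lt.2 ⟨h1, h2⟩))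

lemma chi_small' {r : ℕ} {x : ℤ} (h1 : 0 < x) (h2 : x < 4 * r) (h0 : x ≠ 2 * r) :
    chi r x = 0 := by
  rw [chi_add (y := x - 2 * r) (by simp)]
  exact chi_small (by linarith) (by linarith) (by omega)

lemma chi_zero (r : ℕ) : chi r 0 = 1 := by simp [chi]
lemma chi_self (r : ℕ) : chi r (2 * r) = 1 := by simp [chi]

/-- Reconstruction of an odd periodic function from its values at `1, …, r-1`. -/
lemma sum_chi {r : ℕ} (hr : 2 ≤ r) (F : ℤ → ℂ) (hodd : ∀ m, F (-m) = - F m)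
    (hper : ∀ m c : ℤ, F (m + 2 * r * c) = F m) (x : ℤ) :
    ∑ j : Fin (r - 1), F ((j : ℤ) + 1) * (chi r (x - ((j : ℤ) + 1)) - chi r (x + ((j : ℤ) + 1)))
      = F x := by
  set y := x % (2 * r) with hy
  have hxy : x = y + 2 * r * (x / (2 * r)) := (Int.emod_add_mul_ediv x (2 * r)).symm
  have hy0 : 0 ≤ y := Int.emod_nonneg _ (by omega)
  have hy1 : y < 2 * r := Int.emod_lt_of_pos _ (by omega)
  clear_value y
  have hFx : F x = F y := by rw [hxy, hper]
  have hc1 : ∀ j : ℤ, chi r (x - j) = chi r (y - j) := fun j =>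
    chi_add ⟨x / (2 * r), by linear_combination hxy⟩
  have hc2 : ∀ j : ℤ, chi r (x + j) = chi r (y + j) := fun j =>
    chi_add ⟨x / (2 * r), by linear_combination hxy⟩
  simp only [hFx, hc1, hc2]
  clear hxy hFx hc1 hc2
  by_cases h0 : y = 0
  · have hF : F y = 0 := by
      have := hodd 0
      rw [neg_zero] at this
      rw [h0]; exact self_eq_neg.1 this
    rw [hF]
    refine Finset.sum_eq_zero fun j _ => ?_
    have := j.2
    rw [chi_small (by omega) (by omega) (by omega), chi_small (by omega) (by omega) (by omega)]
    ring
  by_cases hyr : y = r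
  · have hF : F y = 0 := by
      have h1 := hodd r
      have h2 := hper (-r) 1
      rw [show -(r : ℤ) + 2 * r * 1 = r by ring, h1] at h2
      rw [hyr]; exact self_eq_neg.1 h2
    rw [hF]
    refine Finset.sum_eq_zero fun j _ => ?_
    have := j.2
    rw [chi_small (by omega) (by omega) (by omega), chi_small (by omega) (by omega) (by omega)]
    ring
  by_cases hlt : y < r
  · rw [Finset.sum_eq_single (⟨(y - 1).toNat, by omega⟩ : Fin (r - 1))]
    · have : (((y - 1).toNat : ℕ) : ℤ) + 1 = y := by omega
      simp only [this]
      rw [sub_self, chi_zero, chi_small (by omega) (by omega) (by omega)]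
      ring
    · intro j _ hj
      have h1 := j.2
      have h2 : (j : ℕ) ≠ (y - 1).toNat := fun h => hj (Fin.ext h)
      rw [chi_small (by omega) (by omega) (by omega), chi_small' (by omega) (by omega) (by omega)]
      ring
    · simp
  · rw [Finset.sum_eq_single (⟨(2 * r - y - 1).toNat, by omega⟩ : Fin (r - 1))]
    · have : (((2 * r - y - 1).toNat : ℕ) : ℤ) + 1 = 2 * r - y := by omega
      simp only [this]
      rw [show y + (2 * r - y) = 2 * (r : ℤ) by ring, chi_self,
        chi_small (by omega) (by omega) (by omega)]
      have h1 := hper (-y) 1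
      rw [hodd, show -y + 2 * r * 1 = 2 * r - y by ring] at h1
      rw [h1]
      ring
    · intro j _ hj
      have h1 := j.2
      have h2 : (j : ℕ) ≠ (2 * r - y - 1).toNat := fun h => hj (Fin.ext h)
      rw [chi_small (by omega) (by omega) (by omega), chi_small' (by omega) (by omega) (by omega)]
      ring
    · simp

/-- Product-to-sum formula for collinear vectors. -/
lemma Cmat_mul {r : ℕ} (hr : 2 ≤ r) (p q n : ℤ) :
    Cmat r (n * p) (n * q) * Cmat r p q =
      Cmat r ((n + 1) * p) ((n + 1) * q) + Cmat r ((n - 1) * p) ((n - 1) * q) := by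
  ext k m
  rw [Matrix.mul_apply, Matrix.add_apply]
  simp only [Cmat_apply]
  generalize (k : ℤ) + 1 = K
  generalize (m : ℤ) + 1 = M
  have hs := sum_chi hr (G r (n * p) (n * q) K) (G_odd r _ _ _) (G_per hr _ _ _)
  have h1 : ∑ j : Fin (r - 1), G r (n * p) (n * q) K ((j : ℤ) + 1) * G r p q ((j : ℤ) + 1) M
      = tconst r ^ (-(p * q)) * (tconst r ^ (2 * q * M) * G r (n * p) (n * q) K (M - p)
        + tconst r ^ (-(2 * q * M)) * G r (n * p) (n * q) K (M + p)) := by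
    rw [← hs (M - p), ← hs (M + p), Finset.mul_sum, Finset.mul_sum, ← Finset.sum_add_distrib,
      Finset.mul_sum]
    refine Finset.sum_congr rfl fun j _ => ?_
    rw [G.eq_def r p q]
    ring
  rw [h1]
  simp only [G_expand]
  simp only [mul_add, mul_sub, ← mul_assoc, ← zpow_add₀ (t_ne r)]
  ring_nf

/-- Sum of a periodic function vanishing at `0` and `r`. -/
lemma sum_fold {r : ℕ} (hr : 2 ≤ r) (g : ℤ → ℂ) (hper : ∀ m : ℤ, g (m + 2 * r) = g m)
    (h0 : g 0 = 0) (h1 : g r = 0) :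
    ∑ j : Fin (r - 1), (g ((j : ℤ) + 1) + g (-((j : ℤ) + 1))) =
      ∑ m ∈ Finset.range (2 * r), g m := by
  rw [two_mul, Finset.sum_range_add, Finset.sum_add_distrib]
  obtain ⟨s, rfl⟩ : ∃ s, r = s + 1 := ⟨r - 1, by omega⟩
  rw [Finset.sum_range_succ', Finset.sum_range_succ']
  simp only [Nat.cast_zero, h0, h1, add_zero]
  congr 1
  · rw [Finset.sum_range]; simp
  · rw [← Finset.sum_range_reflect, Finset.sum_range]
    refine Finset.sum_congr rfl fun j _ => ?_
    have hj : (j : ℕ) < s := j.2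
    rw [← hper]
    congr 1
    push_cast [Nat.cast_sub (show (j : ℕ) ≤ s - 1 by omega), Nat.cast_sub (show 1 ≤ s by omega)]
    ring

lemma geom {r : ℕ} (hr : 2 ≤ r) (q : ℤ) :
    ∑ m ∈ Finset.range (2 * r), tconst r ^ (2 * q * (m : ℤ)) =
      if (2 * (r : ℤ)) ∣ q then (2 * r : ℂ) else 0 := by
  have hz : ∀ m : ℕ, tconst r ^ (2 * q * (m : ℤ)) = (tconst r ^ (2 * q)) ^ m := by
    intro m; rw [_root_.zpow_mul, zpow_natCast]
  simp only [hz]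
  have hiff : tconst r ^ (2 * q) = 1 ↔ (2 * (r : ℤ)) ∣ q := by
    rw [(t_prim hr).zpow_eq_one_iff_dvd]
    push_cast
    rw [show 4 * (r : ℤ) = 2 * (2 * r) by ring]
    exact mul_dvd_mul_iff_left (by norm_num)
  split_ifs with h
  · rw [hiff.2 h]; simp
  · have hne : tconst r ^ (2 * q) ≠ 1 := fun h' => h (hiff.1 h')
    have h3 := mul_geom_sum (tconst r ^ (2 * q)) (2 * r)
    have h4 : (tconst r ^ (2 * q)) ^ (2 * r) = 1 := by
      rw [← zpow_natCast, ← _root_.zpow_mul, (t_prim hr).zpow_eq_one_iff_dvd]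
      exact ⟨q, by push_cast; ring⟩
    rw [h4, sub_self] at h3
    exact (mul_eq_zero.1 h3).resolve_left (sub_ne_zero.2 hne)

lemma sum_second {r : ℕ} (hr : 2 ≤ r) (p q : ℤ) :
    tconst r ^ (-(p * q)) * ∑ m ∈ Finset.range (2 * r),
        tconst r ^ (2 * q * (m : ℤ)) * chi r (2 * m - p) =
      if (2 : ℤ) ∣ p ∧ (2 : ℤ) ∣ q then 2 else 0 := by
  have hm1 : tconst r ^ (2 * (r : ℤ)) = -1 := by
    have : (r : ℂ) ≠ 0 := by exact_mod_cast (by omega : r ≠ 0)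
    unfold tconst
    rw [← Complex.exp_int_mul, ← Complex.exp_pi_mul_I]
    congr 1
    push_cast
    field_simp
  by_cases hp : (2 : ℤ) ∣ p
  · obtain ⟨s, rfl⟩ := hp
    have hchi : ∀ x : ℤ, chi r (2 * x) = if (r : ℤ) ∣ x then 1 else 0 := by
      intro x
      unfold chi
      simp only [mul_dvd_mul_iff_left (two_ne_zero : (2 : ℤ) ≠ 0)]
    set y := s % r with hy
    have hxy : s = y + r * (s / r) := (Int.emod_add_mul_ediv s r).symm
    have hy0 : 0 ≤ y := Int.emod_nonneg _ (by omega)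
    have hy1 : y < r := Int.emod_lt_of_pos _ (by omega)
    clear_value y
    generalize s / (r : ℤ) = a at hxy
    rw [two_mul r, Finset.sum_range_add, ← Finset.sum_add_distrib]
    rw [Finset.sum_eq_single y.toNat]
    · have hyn : ((y.toNat : ℕ) : ℤ) = y := by omega
      push_cast
      rw [hyn, ← mul_sub, ← mul_sub, hchi, hchi, if_pos ⟨-a, by linear_combination -hxy⟩,
        if_pos ⟨1 - a, by linear_combination -hxy⟩, mul_one, mul_one, mul_add,
        ← zpow_add₀ (t_ne r), ← zpow_add₀ (t_ne r)]
      have e1 : -(2 * s * q) + 2 * q * y = 2 * r * (-(q * a)) := by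
        linear_combination (-2 * q) * hxy
      have e2 : -(2 * s * q) + 2 * q * (r + y) = 2 * r * (q * (1 - a)) := by
        linear_combination (-2 * q) * hxy
      rw [e1, e2, _root_.zpow_mul _ (2 * (r : ℤ)), _root_.zpow_mul _ (2 * (r : ℤ)), hm1]
      simp only [dvd_mul_right, true_and]
      rcases Int.even_or_odd q with hq | hq
      · rw [if_pos hq.two_dvd, Even.neg_one_zpow (hq.mul_right a).neg,
          Even.neg_one_zpow (hq.mul_right _)]
        norm_num
      · rw [if_neg (by rwa [← even_iff_two_dvd, Int.not_even_iff_odd])]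
        rcases Int.even_or_odd a with ha | ha
        · rw [Even.neg_one_zpow (ha.mul_left q).neg,
            Odd.neg_one_zpow (hq.mul (odd_one.sub_even ha))]
          norm_num
        · rw [Odd.neg_one_zpow (hq.mul ha).neg,
            Even.neg_one_zpow ((odd_one.sub_odd ha).mul_left q)]
          norm_num
    · intro m hm hne
      rw [Finset.mem_range] at hm
      have hnd : ¬ (r : ℤ) ∣ (m : ℤ) - s := by
        rintro ⟨c, hc⟩
        have h5 : (r : ℤ) ∣ (m : ℤ) - y := ⟨c + a, by linear_combination hc + hxy⟩
        have := Int.eq_zero_of_abs_lt_dvd h5 (abs_lt.2 ⟨by omega, by omega⟩)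
        omega
      have hnd2 : ¬ (r : ℤ) ∣ ((r + m : ℕ) : ℤ) - s := by
        intro h
        apply hnd
        have := dvd_sub h (dvd_refl (r : ℤ))
        push_cast at this
        rwa [show (r : ℤ) + m - s - r = m - s by ring] at this
      rw [← mul_sub, ← mul_sub, hchi, hchi, if_neg hnd, if_neg hnd2]
      simp
    · intro h
      exact absurd (Finset.mem_range.2 (by omega)) h
  · rw [if_neg (fun h => hp h.1), Finset.sum_eq_zero, mul_zero]
    intro m _
    have : chi r (2 * m - p) = 0 := by
      unfold chi
      rw [if_neg]
      rintro ⟨c, hc⟩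
      exact hp ⟨m - r * c, by linear_combination -hc⟩
    rw [this, mul_zero]

lemma trace_Cmat {r : ℕ} (hr : 2 ≤ r) (p q : ℤ) :
    (Cmat r p q).trace = (if (2 * (r : ℤ)) ∣ p ∧ (2 * (r : ℤ)) ∣ q then (2 * r : ℂ) else 0)
      - (if (2 : ℤ) ∣ p ∧ (2 : ℤ) ∣ q then 2 else 0) := by
  have hg := sum_fold hr (fun m => tconst r ^ (2 * q * m) * (chi r p - chi r (2 * m - p)))
    (by
      intro m
      rw [t_congr hr (show (4 * (r : ℤ)) ∣ 2 * q * (m + 2 * r) - 2 * q * m from ⟨q, by ring⟩),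
        chi_add (show (2 * (r : ℤ)) ∣ (2 * (m + 2 * r) - p) - (2 * m - p) from ⟨2, by ring⟩)])
    (by rw [chi_neg' (show 2 * 0 - p = -p by ring)]; ring)
    (by
      rw [chi_add (show (2 * (r : ℤ)) ∣ (2 * r - p) - (-p) from ⟨1, by ring⟩),
        chi_neg' (show -p = -p from rfl)]
      ring)
  rw [← sum_second hr p q]
  have h1 : (Cmat r p q).trace = tconst r ^ (-(p * q)) *
      ∑ m ∈ Finset.range (2 * r), tconst r ^ (2 * q * (m : ℤ)) * (chi r p - chi r (2 * m - p)) := by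
    rw [← hg, Matrix.trace, Finset.mul_sum]
    refine Finset.sum_congr rfl fun j _ => ?_
    rw [Matrix.diag_apply, Cmat_apply]
    generalize (j : ℤ) + 1 = k
    unfold G
    rw [chi_neg' (show k - p - k = -p by ring), show k - p + k = 2 * k - p by ring,
      show k + p - k = p by ring, chi_neg' (show k + p + k = -(2 * -k - p) by ring)]
    ring_nf
  rw [h1]
  simp only [mul_sub, Finset.sum_sub_distrib]
  congr 1
  rw [← Finset.sum_mul, geom hr]
  by_cases hp : (2 * (r : ℤ)) ∣ p
  · by_cases hq : (2 * (r : ℤ)) ∣ q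
    · have : tconst r ^ (-(p * q)) = tconst r ^ (0 : ℤ) := by
        apply t_congr hr
        obtain ⟨a, rfl⟩ := hp
        obtain ⟨b, rfl⟩ := hq
        exact ⟨-(r * a * b), by ring⟩
      rw [this]
      simp [hp, hq, chi]
    · simp [hq]
  · simp [hp, chi]

lemma trace_scale {r : ℕ} (hr : 2 ≤ r) (p q n : ℤ) :
    (Cmat r (n * p) (n * q)).trace =
      (Cmat r (n * 0) (n * (Int.gcd p (Int.gcd q (2 * (r : ℤ))) : ℤ))).trace := by
  have key : ∀ e : ℤ, e ∣ 2 * (r : ℤ) → ((e ∣ n * p ∧ e ∣ n * q) ↔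
      (e ∣ n * 0 ∧ e ∣ n * (Int.gcd p (Int.gcd q (2 * (r : ℤ))) : ℤ))) := by
    intro e he
    constructor
    · rintro ⟨h1, h2⟩
      refine ⟨by simp, ?_⟩
      have h3 : e ∣ n * (2 * (r : ℤ)) := he.mul_left n
      obtain ⟨x, y, hxy⟩ := Int.gcd_dvd_iff.1 (dvd_refl (Int.gcd q (2 * (r : ℤ))))
      obtain ⟨z, w, hzw⟩ := Int.gcd_dvd_iff.1 (dvd_refl (Int.gcd p (Int.gcd q (2 * (r : ℤ)))))
      rw [hzw, hxy]
      have : n * (p * z + (q * x + 2 * (r : ℤ) * y) * w)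
        = (n * p) * z + (n * q) * (x * w) + (n * (2 * r)) * (y * w) := by ring
      rw [this]
      exact dvd_add (dvd_add (h1.mul_right _) (h2.mul_right _)) (h3.mul_right _)
    · rintro ⟨-, h⟩
      exact ⟨h.trans (mul_dvd_mul_left n (Int.gcd_dvd_left _ _)),
        h.trans (mul_dvd_mul_left n ((Int.gcd_dvd_right _ _).trans (Int.gcd_dvd_left _ _)))⟩
  rw [trace_Cmat hr, trace_Cmat hr]
  simp only [key _ (dvd_refl _), key 2 (dvd_mul_right _ _)]

lemma Cmat_zero {r : ℕ} (d : ℤ) : Cmat r 0 d = Matrix.diagonal fun k : Fin (r - 1) =>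
    (((2 * Real.cos ((d : ℝ) * ((k : ℝ) + 1) * Real.pi / r) : ℝ) : ℂ)) := by
  ext k m
  have hk := k.2
  have hm := m.2
  rw [Cmat_apply, Matrix.diagonal_apply]
  unfold G
  split_ifs with h
  · subst h
    rw [chi_small' (x := (k : ℤ) + 1 - 0 + (k + 1)) (by omega) (by omega) (by omega),
      chi_small' (x := (k : ℤ) + 1 + 0 + (k + 1)) (by omega) (by omega) (by omega)]
    simp only [sub_zero, add_zero, sub_self, chi_zero, mul_one, zero_mul, neg_zero, zpow_zero,
      one_mul]
    push_cast
    rw [Complex.two_cos]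
    unfold tconst
    rw [← Complex.exp_int_mul, ← Complex.exp_int_mul]
    have : (r : ℂ) ≠ 0 := by exact_mod_cast (by omega : r ≠ 0)
    congr 2
    · push_cast; field_simp
    · push_cast; field_simp
  · have hne : (k : ℕ) ≠ m := fun h' => h (Fin.ext h')
    rw [chi_small (by omega) (by omega) (by omega), chi_small' (by omega) (by omega) (by omega),
      chi_small (by omega) (by omega) (by omega), chi_small' (by omega) (by omega) (by omega)]
    ring

lemma Cmat_zero_zero {r : ℕ} : Cmat r 0 0 = (2 : ℂ) • (1 : Matrix (Fin (r - 1)) (Fin (r - 1)) ℂ) := by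
  rw [Cmat_zero, ← Matrix.diagonal_one, ← Matrix.diagonal_smul]
  congr 1
  ext k
  simp

lemma trace_pow_eq {r : ℕ} (hr : 2 ≤ r) (p q d : ℤ)
    (h : ∀ n : ℤ, (Cmat r (n * p) (n * q)).trace = (Cmat r (n * 0) (n * d)).trace) (k : ℕ) :
    ((Cmat r p q) ^ k).trace = ((Cmat r 0 d) ^ k).trace := by
  have main : ∀ k : ℕ, ∀ n : ℤ, (Cmat r (n * p) (n * q) * (Cmat r p q) ^ k).trace =
      (Cmat r (n * 0) (n * d) * (Cmat r 0 d) ^ k).trace := by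
    intro k
    induction k with
    | zero => intro n; simpa using h n
    | succ k ih =>
      intro n
      rw [pow_succ', pow_succ', ← mul_assoc, ← mul_assoc, Cmat_mul hr, Cmat_mul hr, Matrix.add_mul,
        Matrix.add_mul, Matrix.trace_add, Matrix.trace_add, ih, ih]
  have := main k 0
  simp only [zero_mul, Cmat_zero_zero, smul_mul_assoc, one_mul, Matrix.trace_smul, smul_eq_mul] at this
  exact mul_left_cancel₀ two_ne_zero this

end CharpolyAux

/-- The characteristic polynomial of `C(p,q)` is `∏_{k=1}^{r−1} (λ − 2 cos(d·kπ/r))`,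
where `d = gcd(p, q, 2r)`. -/
theorem charpoly_Cmat (r : ℕ) (hr : 2 ≤ r) (p q : ℤ) :
    (Cmat r p q).charpoly =
      ∏ k : Fin (r - 1),
        (Polynomial.X - Polynomial.C
          (((2 * Real.cos ((Int.gcd p (Int.gcd q (2 * (r : ℤ))) : ℝ) * ((k : ℝ) + 1) *
            Real.pi / r) : ℝ) : ℂ))) := by
  rw [CharpolyAux.charpoly_eq_of_trace_pow (CharpolyAux.Cmat_herm hr p q)
    (CharpolyAux.Cmat_herm hr 0 (Int.gcd p (Int.gcd q (2 * (r : ℤ))) : ℤ))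
    (CharpolyAux.trace_pow_eq hr p q _ (CharpolyAux.trace_scale hr p q)),
    CharpolyAux.Cmat_zero, Matrix.charpoly_diagonal]
  simp only [Int.cast_natCast]
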